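/- Under the linear predictor–corrector setup (see context), there exist h₀ > 0 and a constant C, both depending only on α, M, L, T, y and f but not on the grid, such that for all 0 < h ≤ h₀ and all 1 ≤ n ≤ N the predictor error satisfies |Eᴾₙ₊₁| ≤ (2L(1−α)/M)(|Eₙ₋₁| + 2|Eₙ|) + 4βh Σ_{j=1}^{n} |E_j| + C h². -/

import Mathlib

open Real MeasureTheory Finset

/-- Weight `B¹ₙ₊₁ʲ` of the linear-interpolation predictor–corrector scheme. -/
noncomputable def linB1 (β h : ℝ) (n j : ℕ) : ℝ :=
  (1 / h) * ∫ s in ((j : ℝ) * h)..(((j : ℝ) + 1) * h),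
    (((j : ℝ) + 1) * h - s) * Real.exp (-β * (((n : ℝ) + 1) * h - s))

/-- Weight `B²ₙ₊₁ʲ` of the linear-interpolation predictor–corrector scheme. -/
noncomputable def linB2 (β h : ℝ) (n j : ℕ) : ℝ :=
  (1 / h) * ∫ s in ((j : ℝ) * h)..(((j : ℝ) + 1) * h),
    (s - (j : ℝ) * h) * Real.exp (-β * (((n : ℝ) + 1) * h - s))

/-!
Subtracting the predictor equation from the integral equation at `t_{n+1}` gives
`(1 - βB²) Eᴾ = c A + β (Q + H)`, where `c = (1 - α) / M`, `A` is the error of extrapolating `f`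
from `t_{n-1}, t_n`, `Q` is the error of the product-trapezoidal quadrature and `H` is the same
quadrature applied to the earlier errors. Both `A` and `Q` are controlled by one estimate, the
quadratic distance between a `C²` function and its chords: `Q` integrates the chord error of `y`
over the cells, and `A` is, up to the Lipschitz contribution of `Eₙ₋₁` and `Eₙ`, `-2` times the
chord error of `t ↦ f (t, y t)` at the midpoint of `[t_{n-1}, t_{n+1}]`. The weights are at most
`h / 2`, so `|H| ≤ h ∑ |E_j|`, and `1 - βB² ≥ 1 / 2` as soon as `βh ≤ 1`.
-/

open AffineMap
open scoped NNReal

section ChordError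

variable {V E : Type*} [NormedAddCommGroup V] [NormedSpace ℝ V]
  [NormedAddCommGroup E] [NormedSpace ℝ E] {g : V → E} {s : Set V} {K : ℝ≥0}

/-- The error of linear interpolation of `g` between two points of `s` is at most `K` times the
squared distance of these points. -/
def ChordErrorBoundOn (g : V → E) (s : Set V) (K : ℝ≥0) : Prop :=
  ∀ a ∈ s, ∀ b ∈ s, ∀ t ∈ Set.Icc (0 : ℝ) 1,
    ‖g (lineMap a b t) - lineMap (g a) (g b) t‖ ≤ K * ‖b - a‖ ^ 2

theorem ChordErrorBoundOn.mono {r : Set V} (hg : ChordErrorBoundOn g s K) (hrs : r ⊆ s) :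
    ChordErrorBoundOn g r K :=
  fun a ha b hb ↦ hg a (hrs ha) b (hrs hb)

theorem norm_sub_sub_fderivWithin_le_of_lipschitzOnWith (hs : Convex ℝ s)
    (hg : DifferentiableOn ℝ g s) (hK : LipschitzOnWith K (fderivWithin ℝ g s) s)
    {a b : V} (ha : a ∈ s) (hb : b ∈ s) :
    ‖g b - g a - fderivWithin ℝ g s a (b - a)‖ ≤ K * ‖b - a‖ ^ 2 := by
  have hsub : segment ℝ a b ⊆ s := hs.segment_subset ha hb
  have hderiv : ∀ x ∈ segment ℝ a b,
      ‖fderivWithin ℝ g s x - fderivWithin ℝ g s a‖ ≤ K * ‖b - a‖ := fun x hx ↦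
    (hK.norm_sub_le (hsub hx) ha).trans <|
      mul_le_mul_of_nonneg_left (norm_sub_le_of_mem_segment hx) K.2
  calc ‖g b - g a - fderivWithin ℝ g s a (b - a)‖
      ≤ K * ‖b - a‖ * ‖b - a‖ :=
        (convex_segment a b).norm_image_sub_le_of_norm_hasFDerivWithin_le'
          (fun x hx ↦ (hg x (hsub hx)).hasFDerivWithinAt.mono hsub) hderiv
          (left_mem_segment ℝ a b) (right_mem_segment ℝ a b)
    _ = K * ‖b - a‖ ^ 2 := by ring

theorem chordErrorBoundOn_of_lipschitzOnWith_fderivWithin (hs : Convex ℝ s)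
    (hg : DifferentiableOn ℝ g s) (hK : LipschitzOnWith K (fderivWithin ℝ g s) s) :
    ChordErrorBoundOn g s K := by
  intro a ha b hb t ht
  obtain ⟨ht0, ht1⟩ := ht
  set x := lineMap a b t with hx
  set D := fderivWithin ℝ g s x
  have hxs : x ∈ s := hs.lineMap_mem ha hb ⟨ht0, ht1⟩
  have hax : a - x = -(t • (b - a)) := by rw [hx, lineMap_apply_module]; module
  have hbx : b - x = (1 - t) • (b - a) := by rw [hx, lineMap_apply_module]; module
  have hRa : ‖g a - g x - D (a - x)‖ ≤ K * (t * ‖b - a‖) ^ 2 := by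
    simpa only [hax, norm_neg, norm_smul, Real.norm_of_nonneg ht0] using
      norm_sub_sub_fderivWithin_le_of_lipschitzOnWith hs hg hK hxs ha
  have hRb : ‖g b - g x - D (b - x)‖ ≤ K * ((1 - t) * ‖b - a‖) ^ 2 := by
    simpa only [hbx, norm_smul, Real.norm_of_nonneg (sub_nonneg.2 ht1)] using
      norm_sub_sub_fderivWithin_le_of_lipschitzOnWith hs hg hK hxs hb
  -- The first-order terms of the expansions around `x` cancel.
  have hsplit : lineMap (g a) (g b) t - g x
      = (1 - t) • (g a - g x - D (a - x)) + t • (g b - g x - D (b - x)) := by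
    rw [hax, hbx, map_neg, map_smul, map_smul, lineMap_apply_module]
    module
  calc ‖g x - lineMap (g a) (g b) t‖
      = ‖(1 - t) • (g a - g x - D (a - x)) + t • (g b - g x - D (b - x))‖ := by
        rw [norm_sub_rev, hsplit]
    _ ≤ (1 - t) * ‖g a - g x - D (a - x)‖ + t * ‖g b - g x - D (b - x)‖ := by
        refine (norm_add_le _ _).trans_eq ?_
        rw [norm_smul, norm_smul, Real.norm_of_nonneg ht0, Real.norm_of_nonneg (sub_nonneg.2 ht1)]
    _ ≤ (1 - t) * (K * (t * ‖b - a‖) ^ 2) + t * (K * ((1 - t) * ‖b - a‖) ^ 2) := by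
        gcongr
    _ = t * (1 - t) * (K * ‖b - a‖ ^ 2) := by ring
    _ ≤ K * ‖b - a‖ ^ 2 := mul_le_of_le_one_left (by positivity) (by nlinarith)

theorem exists_chordErrorBoundOn (hs : Convex ℝ s) (hc : IsCompact s) (hu : UniqueDiffOn ℝ s)
    (hg : ContDiffOn ℝ 2 g s) : ∃ K : ℝ≥0, ChordErrorBoundOn g s K := by
  obtain ⟨K, hK⟩ := (hg.fderivWithin (m := 1) hu (by norm_num)).exists_lipschitzOnWith
    one_ne_zero hs hc
  exact ⟨K, chordErrorBoundOn_of_lipschitzOnWith_fderivWithin hs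
    (hg.differentiableOn two_ne_zero) hK⟩

theorem ChordErrorBoundOn.norm_sub_extrapolation_le (hg : ChordErrorBoundOn g s K) {x v : V}
    (hsub : x - v ∈ s) (hadd : x + v ∈ s) :
    ‖g (x + v) - ((2 : ℝ) • g x - g (x - v))‖ ≤ 8 * K * ‖v‖ ^ 2 := by
  have hmid : lineMap (x - v) (x + v) (1 / 2 : ℝ) = x := by
    rw [lineMap_apply_module]; module
  have hchord := hg _ hsub _ hadd (1 / 2) (by norm_num)
  rw [hmid, show x + v - (x - v) = (2 : ℝ) • v by module, norm_smul, Real.norm_ofNat] at hchord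
  calc ‖g (x + v) - ((2 : ℝ) • g x - g (x - v))‖
      = ‖(-2 : ℝ) • (g x - lineMap (g (x - v)) (g (x + v)) (1 / 2 : ℝ))‖ := by
        rw [lineMap_apply_module]; congr 1; module
    _ = 2 * ‖g x - lineMap (g (x - v)) (g (x + v)) (1 / 2 : ℝ)‖ := by
        rw [norm_smul, norm_neg, Real.norm_ofNat]
    _ ≤ 2 * (K * (2 * ‖v‖) ^ 2) := by gcongr
    _ = 8 * K * ‖v‖ ^ 2 := by ring

end ChordError

theorem norm_lineMap_le {E : Type*} [SeminormedAddCommGroup E] [NormedSpace ℝ E] (u v : E) {t : ℝ}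
    (ht : t ∈ Set.Icc (0 : ℝ) 1) : ‖lineMap u v t‖ ≤ lineMap ‖u‖ ‖v‖ t := by
  simpa only [lineMap_apply_module, smul_eq_mul] using
    convexOn_univ_norm.2 (Set.mem_univ u) (Set.mem_univ v) (sub_nonneg.2 ht.2) ht.1
      (sub_add_cancel 1 t)

theorem norm_exp_neg_mul_sub_smul_le {E : Type*} [SeminormedAddCommGroup E] [NormedSpace ℝ E]
    {β s t : ℝ} (hβ : 0 ≤ β) (hst : s ≤ t) (w : E) :
    ‖Real.exp (-β * (t - s)) • w‖ ≤ ‖w‖ := by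
  have hexp : Real.exp (-β * (t - s)) ≤ 1 := by
    rw [Real.exp_le_one_iff, neg_mul, neg_nonpos]
    exact mul_nonneg hβ (sub_nonneg.2 hst)
  rw [norm_smul, Real.norm_of_nonneg (Real.exp_pos _).le]
  exact mul_le_of_le_one_left (norm_nonneg w) hexp

theorem integral_lineMap_sub_div {h : ℝ} (hh : h ≠ 0) (a u v : ℝ) :
    ∫ s in a..a + h, lineMap u v ((s - a) / h) = h / 2 * (u + v) := by
  simp only [sub_div]
  rw [intervalIntegral.integral_comp_div_sub (fun x ↦ lineMap u v x) hh, sub_self,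
    show (a + h) / h - a / h = 1 by field_simp; ring]
  simp only [lineMap_apply_ring']
  rw [intervalIntegral.integral_add (by simp) (by simp)]
  simp only [intervalIntegral.integral_mul_const, intervalIntegral.integral_const, integral_id,
    smul_eq_mul]
  ring

theorem sum_range_succ_eq_sum_Icc_one {A : Type*} [AddCommMonoid A] {e : ℕ → A} (he : e 0 = 0)
    (n : ℕ) : ∑ j ∈ range (n + 1), e j = ∑ j ∈ Icc 1 n, e j := by
  rw [sum_range_eq_add_Ico e n.succ_pos, he, zero_add]
  rfl

section Quadrature

variable {E : Type*} [NormedAddCommGroup E] [NormedSpace ℝ E] {β h : ℝ} {n j : ℕ}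

/-- The part of the product-trapezoidal approximation of
`∫ s in 0..t_{n+1}, exp (-β (t_{n+1} - s)) u(s)` that involves only the values `u 0, …, u n` at
the nodes `t_j = jh`; the contribution of the node `t_{n+1}` is `linB2 β h n n • u (n + 1)`. -/
noncomputable def linHistory (β h : ℝ) (n : ℕ) (u : ℕ → E) : E :=
  ∑ j ∈ range n, (linB1 β h n j • u j + linB2 β h n j • u (j + 1)) + linB1 β h n n • u n

theorem linHistory_sub (u v : ℕ → E) :
    linHistory β h n (fun j ↦ u j - v j) = linHistory β h n u - linHistory β h n v := by
  simp only [linHistory, smul_sub, sum_add_distrib, sum_sub_distrib]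
  abel

theorem sum_range_succ_linB_smul (u : ℕ → E) :
    ∑ j ∈ range (n + 1), (linB1 β h n j • u j + linB2 β h n j • u (j + 1))
      = linHistory β h n u + linB2 β h n n • u (n + 1) := by
  rw [sum_range_succ, linHistory, add_assoc]

theorem sub_div_mem_Icc_of_mem_cell (hh : 0 < h) {s : ℝ}
    (hs : s ∈ Set.Icc ((j : ℝ) * h) (((j : ℝ) + 1) * h)) :
    (s - j * h) / h ∈ Set.Icc (0 : ℝ) 1 :=
  ⟨div_nonneg (sub_nonneg.2 hs.1) hh.le, (div_le_one hh).2 (by linarith [hs.2])⟩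

variable [CompleteSpace E]

theorem linB1_smul_add_linB2_smul (hh : h ≠ 0) (u v : E) :
    linB1 β h n j • u + linB2 β h n j • v
      = ∫ s in ((j : ℝ) * h)..(((j : ℝ) + 1) * h),
          Real.exp (-β * (((n : ℝ) + 1) * h - s)) • lineMap u v ((s - j * h) / h) := by
  rw [linB1, linB2, ← intervalIntegral.integral_const_mul, ← intervalIntegral.integral_const_mul,
    ← intervalIntegral.integral_smul_const, ← intervalIntegral.integral_smul_const,
    ← intervalIntegral.integral_add (Continuous.intervalIntegrable (by fun_prop) _ _)
      (Continuous.intervalIntegrable (by fun_prop) _ _)]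
  refine intervalIntegral.integral_congr fun s _ ↦ ?_
  have hleft : 1 - (s - j * h) / h = 1 / h * (((j : ℝ) + 1) * h - s) := by field_simp; ring
  simp only [lineMap_apply_module, hleft]
  module

theorem norm_linB1_smul_add_linB2_smul_le (hβ : 0 ≤ β) (hh : 0 < h) (hj : j ≤ n) (u v : E) :
    ‖linB1 β h n j • u + linB2 β h n j • v‖ ≤ h / 2 * (‖u‖ + ‖v‖) := by
  have hcell : ((j : ℝ) + 1) * h = j * h + h := by ring
  have hle : (j : ℝ) * h ≤ ((j : ℝ) + 1) * h := by linarith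
  calc ‖linB1 β h n j • u + linB2 β h n j • v‖
      ≤ ∫ s in ((j : ℝ) * h)..(((j : ℝ) + 1) * h), lineMap ‖u‖ ‖v‖ ((s - j * h) / h) := by
        rw [linB1_smul_add_linB2_smul hh.ne']
        refine intervalIntegral.norm_integral_le_of_norm_le hle (.of_forall fun s hs ↦ ?_)
          (Continuous.intervalIntegrable (by simp only [lineMap_apply_ring]; fun_prop) _ _)
        exact (norm_exp_neg_mul_sub_smul_le hβ (hs.2.trans (by gcongr)) _).trans
          (norm_lineMap_le u v (sub_div_mem_Icc_of_mem_cell hh (Set.Ioc_subset_Icc_self hs)))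
    _ = h / 2 * (‖u‖ + ‖v‖) := by rw [hcell, integral_lineMap_sub_div hh.ne']

theorem linB2_le (hβ : 0 ≤ β) (hh : 0 < h) (hj : j ≤ n) : linB2 β h n j ≤ h / 2 := by
  simpa using (le_abs_self _).trans
    (norm_linB1_smul_add_linB2_smul_le (E := ℝ) hβ hh hj 0 1)

theorem half_le_one_sub_mul_linB2 (hβ : 0 ≤ β) (hh : 0 < h) (hβh : β * h ≤ 1) :
    1 / 2 ≤ 1 - β * linB2 β h n n := by
  linarith [mul_le_mul_of_nonneg_left (linB2_le (n := n) hβ hh le_rfl) hβ]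

theorem norm_linHistory_le (hβ : 0 ≤ β) (hh : 0 < h) (u : ℕ → E) :
    ‖linHistory β h n u‖ ≤ h * ∑ j ∈ range (n + 1), ‖u j‖ := by
  have hlast : ‖linB1 β h n n • u n‖ ≤ h / 2 * ‖u n‖ := by
    simpa using norm_linB1_smul_add_linB2_smul_le hβ hh le_rfl (u n) 0
  have hcells : ‖∑ j ∈ range n, (linB1 β h n j • u j + linB2 β h n j • u (j + 1))‖
      ≤ ∑ j ∈ range n, h / 2 * (‖u j‖ + ‖u (j + 1)‖) :=
    norm_sum_le_of_le _ fun j hj ↦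
      norm_linB1_smul_add_linB2_smul_le hβ hh (mem_range.1 hj).le (u j) (u (j + 1))
  calc ‖linHistory β h n u‖
      ≤ ∑ j ∈ range n, h / 2 * (‖u j‖ + ‖u (j + 1)‖) + h / 2 * ‖u n‖ :=
        norm_add_le_of_le hcells hlast
    _ = h / 2 * ((∑ j ∈ range n, ‖u j‖ + ‖u n‖) + ∑ j ∈ range n, ‖u (j + 1)‖) := by
        rw [← mul_sum, sum_add_distrib]; ring
    _ ≤ h / 2 * (∑ j ∈ range (n + 1), ‖u j‖ + ∑ j ∈ range (n + 1), ‖u j‖) := by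
        rw [← sum_range_succ, sum_range_succ' (fun j ↦ ‖u j‖)]
        gcongr
        exact le_add_of_nonneg_right (norm_nonneg _)
    _ = h * ∑ j ∈ range (n + 1), ‖u j‖ := by ring

variable {y : ℝ → E} {K : ℝ≥0}

theorem norm_integral_cell_sub_linB_smul_le (hβ : 0 ≤ β) (hh : 0 < h) (hj : j ≤ n)
    (hyc : ContinuousOn y (Set.Icc ((j : ℝ) * h) (((j : ℝ) + 1) * h)))
    (hy : ChordErrorBoundOn y (Set.Icc ((j : ℝ) * h) (((j : ℝ) + 1) * h)) K) :
    ‖(∫ s in ((j : ℝ) * h)..(((j : ℝ) + 1) * h),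
          Real.exp (-β * (((n : ℝ) + 1) * h - s)) • y s)
        - (linB1 β h n j • y (j * h) + linB2 β h n j • y (((j : ℝ) + 1) * h))‖
      ≤ K * h ^ 2 * h := by
  have hlen : ((j : ℝ) + 1) * h - j * h = h := by ring
  have hle : (j : ℝ) * h ≤ ((j : ℝ) + 1) * h := by linarith
  rw [linB1_smul_add_linB2_smul hh.ne', ← intervalIntegral.integral_sub
    (ContinuousOn.intervalIntegrable_of_Icc hle (by fun_prop))
    (Continuous.intervalIntegrable (by simp only [lineMap_apply_module]; fun_prop) _ _)]
  refine (intervalIntegral.norm_integral_le_of_norm_le_const (C := K * h ^ 2)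
    fun s hs ↦ ?_).trans_eq (by rw [hlen, abs_of_pos hh])
  rw [Set.uIoc_of_le hle] at hs
  have hs_node : lineMap ((j : ℝ) * h) (((j : ℝ) + 1) * h) ((s - j * h) / h) = s := by
    rw [lineMap_apply_ring', hlen]; field_simp; ring
  have hchord := hy _ (Set.left_mem_Icc.2 hle) _ (Set.right_mem_Icc.2 hle) _
    (sub_div_mem_Icc_of_mem_cell hh (Set.Ioc_subset_Icc_self hs))
  rw [hs_node, hlen, Real.norm_of_nonneg hh.le] at hchord
  rw [← smul_sub]
  exact (norm_exp_neg_mul_sub_smul_le hβ (hs.2.trans (by gcongr)) _).trans hchord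

theorem norm_integral_sub_linHistory_le (hβ : 0 ≤ β) (hh : 0 < h)
    (hyc : ContinuousOn y (Set.Icc 0 (((n : ℝ) + 1) * h)))
    (hy : ChordErrorBoundOn y (Set.Icc 0 (((n : ℝ) + 1) * h)) K) :
    ‖(∫ s in (0 : ℝ)..((n : ℝ) + 1) * h, Real.exp (-β * (((n : ℝ) + 1) * h - s)) • y s)
        - (linHistory β h n (fun j ↦ y (j * h)) + linB2 β h n n • y (((n : ℝ) + 1) * h))‖
      ≤ K * h ^ 2 * (((n : ℝ) + 1) * h) := by
  have hcell : ∀ j ≤ n, Set.Icc ((j : ℝ) * h) (((j : ℝ) + 1) * h)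
      ⊆ Set.Icc 0 (((n : ℝ) + 1) * h) := fun j hj ↦
    Set.Icc_subset_Icc (by positivity) (by gcongr)
  have hsplit : ∑ j ∈ range (n + 1), ∫ s in ((j : ℝ) * h)..(((j : ℝ) + 1) * h),
        Real.exp (-β * (((n : ℝ) + 1) * h - s)) • y s
      = ∫ s in (0 : ℝ)..((n : ℝ) + 1) * h, Real.exp (-β * (((n : ℝ) + 1) * h - s)) • y s := by
    have hadj := intervalIntegral.sum_integral_adjacent_intervals (μ := volume)
      (f := fun s ↦ Real.exp (-β * (((n : ℝ) + 1) * h - s)) • y s)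
      (a := fun j : ℕ ↦ (j : ℝ) * h) (n := n + 1) fun j hj ↦ by
        have hyj := hyc.mono (hcell j (Nat.lt_succ_iff.1 hj))
        push_cast
        exact ContinuousOn.intervalIntegrable_of_Icc (by linarith) (by fun_prop)
    simpa only [Nat.cast_add, Nat.cast_one, Nat.cast_zero, zero_mul] using hadj
  have hquad := sum_range_succ_linB_smul (β := β) (h := h) (n := n) (fun j ↦ y (j * h))
  simp only [Nat.cast_add, Nat.cast_one] at hquad
  rw [← hsplit, ← hquad, ← sum_sub_distrib]
  refine (norm_sum_le_of_le _ fun j hj ↦ ?_).trans_eq (b := ∑ j ∈ range (n + 1), K * h ^ 2 * h) ?_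
  · have hjn := Nat.lt_succ_iff.1 (mem_range.1 hj)
    exact norm_integral_cell_sub_linB_smul_le hβ hh hjn (hyc.mono (hcell j hjn))
      (hy.mono (hcell j hjn))
  · rw [sum_const, card_range, nsmul_eq_mul]
    push_cast
    ring

end Quadrature

theorem norm_sub_perturbed_extrapolation_le {E F : Type*} [NormedAddCommGroup E]
    [NormedAddCommGroup F] [NormedSpace ℝ F] {f : ℝ → E → F} {y : ℝ → E} {S : Set ℝ} {L : ℝ}
    {K : ℝ≥0} (hf : ∀ t ∈ S, ∀ u₁ u₂ : E, ‖f t u₁ - f t u₂‖ ≤ L * ‖u₁ - u₂‖)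
    (hfy : ChordErrorBoundOn (fun t ↦ f t (y t)) S K) {t h : ℝ} (hprev : t - h ∈ S) (ht : t ∈ S)
    (hnext : t + h ∈ S) (u₀ u₁ : E) :
    ‖f (t + h) (y (t + h)) - ((2 : ℝ) • f t u₁ - f (t - h) u₀)‖
      ≤ L * (‖y (t - h) - u₀‖ + 2 * ‖y t - u₁‖) + 8 * K * h ^ 2 := by
  have hextra := hfy.norm_sub_extrapolation_le hprev hnext
  rw [Real.norm_eq_abs, sq_abs] at hextra
  calc ‖f (t + h) (y (t + h)) - ((2 : ℝ) • f t u₁ - f (t - h) u₀)‖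
      = ‖(f (t + h) (y (t + h)) - ((2 : ℝ) • f t (y t) - f (t - h) (y (t - h))))
          + (2 : ℝ) • (f t (y t) - f t u₁) + (f (t - h) u₀ - f (t - h) (y (t - h)))‖ := by
        congr 1; module
    _ ≤ 8 * K * h ^ 2 + 2 * (L * ‖y t - u₁‖) + L * ‖y (t - h) - u₀‖ := by
        refine norm_add_le_of_le (norm_add_le_of_le hextra ?_) ?_
        · rw [norm_smul, Real.norm_ofNat]
          exact mul_le_mul_of_nonneg_left (hf t ht _ _) zero_le_two
        · rw [norm_sub_rev]
          exact hf _ hprev _ _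
    _ = L * (‖y (t - h) - u₀‖ + 2 * ‖y t - u₁‖) + 8 * K * h ^ 2 := by ring

section Predictor

variable {E : Type*} [NormedAddCommGroup E] [NormedSpace ℝ E] {c β h T L : ℝ}
  {f : ℝ → E → E} {φ y : ℝ → E} {n : ℕ} {u : ℕ → E} {p : E}

/-- `p` is the predicted value at `t_{n+1}` computed from the values `u 0, …, u n` for the equation
`y t = c f(t, y t) + φ t + β ∫ s in 0..t, exp (-β (t - s)) y(s)`. The index `n - 1` is a natural
number subtraction, so the relation is meaningful for `1 ≤ n` only. -/
def IsLinearPredictor (c β h : ℝ) (f : ℝ → E → E) (φ : ℝ → E) (n : ℕ) (u : ℕ → E) (p : E) : Prop :=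
  (1 - β * linB2 β h n n) • p
    = c • ((2 : ℝ) • f (n * h) (u n) - f ((n - 1 : ℕ) * h) (u (n - 1)))
      + φ (((n : ℝ) + 1) * h) + β • linHistory β h n u

theorem IsLinearPredictor.smul_error_eq (hp : IsLinearPredictor c β h f φ n u p)
    (hint : y (((n : ℝ) + 1) * h)
      = c • f (((n : ℝ) + 1) * h) (y (((n : ℝ) + 1) * h)) + φ (((n : ℝ) + 1) * h)
        + β • ∫ s in (0 : ℝ)..((n : ℝ) + 1) * h, Real.exp (-β * (((n : ℝ) + 1) * h - s)) • y s) :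
    (1 - β * linB2 β h n n) • (y (((n : ℝ) + 1) * h) - p)
      = c • (f (((n : ℝ) + 1) * h) (y (((n : ℝ) + 1) * h))
          - ((2 : ℝ) • f (n * h) (u n) - f ((n - 1 : ℕ) * h) (u (n - 1))))
        + β • ((∫ s in (0 : ℝ)..((n : ℝ) + 1) * h, Real.exp (-β * (((n : ℝ) + 1) * h - s)) • y s)
          - (linHistory β h n (fun j ↦ y (j * h)) + linB2 β h n n • y (((n : ℝ) + 1) * h)))
        + β • linHistory β h n (fun j ↦ y (j * h) - u j) := by
  rw [IsLinearPredictor] at hp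
  rw [linHistory_sub]
  linear_combination (norm := module) hint - hp

variable [CompleteSpace E]

theorem IsLinearPredictor.norm_error_le {K₁ K₂ : ℝ≥0} (hp : IsLinearPredictor c β h f φ n u p)
    (hβ : 0 ≤ β) (hh : 0 < h) (hβh : β * h ≤ 1) (hn : 1 ≤ n) (hnT : ((n : ℝ) + 1) * h ≤ T)
    (hf : ∀ t ∈ Set.Icc (0 : ℝ) T, ∀ u₁ u₂ : E, ‖f t u₁ - f t u₂‖ ≤ L * ‖u₁ - u₂‖)
    (hyc : ContinuousOn y (Set.Icc 0 T)) (hy : ChordErrorBoundOn y (Set.Icc 0 T) K₁)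
    (hfy : ChordErrorBoundOn (fun t ↦ f t (y t)) (Set.Icc 0 T) K₂)
    (hint : y (((n : ℝ) + 1) * h)
      = c • f (((n : ℝ) + 1) * h) (y (((n : ℝ) + 1) * h)) + φ (((n : ℝ) + 1) * h)
        + β • ∫ s in (0 : ℝ)..((n : ℝ) + 1) * h, Real.exp (-β * (((n : ℝ) + 1) * h - s)) • y s) :
    ‖y (((n : ℝ) + 1) * h) - p‖
      ≤ 2 * |c| * L * (‖y ((n - 1 : ℕ) * h) - u (n - 1)‖ + 2 * ‖y (n * h) - u n‖)
        + 2 * β * h * ∑ j ∈ range (n + 1), ‖y (j * h) - u j‖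
        + 2 * (|c| * (8 * K₂) + β * (K₁ * T)) * h ^ 2 := by
  have hprev : ((n - 1 : ℕ) : ℝ) * h = n * h - h := by rw [Nat.cast_pred hn]; ring
  have hnext : ((n : ℝ) + 1) * h = n * h + h := by ring
  have hprev_nonneg : 0 ≤ (n : ℝ) * h - h := hprev ▸ by positivity
  have hsub : Set.Icc 0 (((n : ℝ) + 1) * h) ⊆ Set.Icc 0 T := Set.Icc_subset_Icc_right hnT
  have hextra := norm_sub_perturbed_extrapolation_le hf hfy (t := n * h) (h := h)
    ⟨hprev_nonneg, by linarith⟩ ⟨by positivity, by linarith⟩ ⟨by positivity, by linarith⟩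
    (u (n - 1)) (u n)
  have hquad := (norm_integral_sub_linHistory_le hβ hh (hyc.mono hsub) (hy.mono hsub)).trans
    (mul_le_mul_of_nonneg_left hnT (by positivity))
  have hhist := norm_linHistory_le (n := n) hβ hh (fun j ↦ y (j * h) - u j)
  have hhalf := half_le_one_sub_mul_linB2 (n := n) hβ hh hβh
  rw [← hprev, ← hnext] at hextra
  have hbound : 1 / 2 * ‖y (((n : ℝ) + 1) * h) - p‖
      ≤ |c| * (L * (‖y ((n - 1 : ℕ) * h) - u (n - 1)‖ + 2 * ‖y (n * h) - u n‖) + 8 * K₂ * h ^ 2)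
        + β * (K₁ * h ^ 2 * T) + β * (h * ∑ j ∈ range (n + 1), ‖y (j * h) - u j‖) :=
    calc 1 / 2 * ‖y (((n : ℝ) + 1) * h) - p‖
        ≤ (1 - β * linB2 β h n n) * ‖y (((n : ℝ) + 1) * h) - p‖ := by gcongr
      _ = ‖(1 - β * linB2 β h n n) • (y (((n : ℝ) + 1) * h) - p)‖ := by
          rw [norm_smul, Real.norm_of_nonneg (one_half_pos.le.trans hhalf)]
      _ ≤ _ := by
          rw [hp.smul_error_eq hint]
          refine norm_add₃_le.trans ?_
          rw [norm_smul, norm_smul, norm_smul, Real.norm_of_nonneg hβ, Real.norm_eq_abs]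
          gcongr
  linear_combination 2 * hbound

theorem linear_predictor_error_general (hβ : 0 ≤ β) (hT : 0 < T)
    (hf : ∀ t ∈ Set.Icc (0 : ℝ) T, ∀ u₁ u₂ : E, ‖f t u₁ - f t u₂‖ ≤ L * ‖u₁ - u₂‖)
    (hy : ContDiffOn ℝ 2 y (Set.Icc 0 T))
    (hfy : ContDiffOn ℝ 2 (fun t ↦ f t (y t)) (Set.Icc 0 T))
    (hint : ∀ t ∈ Set.Icc (0 : ℝ) T,
      y t = c • f t (y t) + φ t + β • ∫ s in (0 : ℝ)..t, Real.exp (-β * (t - s)) • y s) :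
    ∃ C : ℝ, ∀ h > 0, β * h ≤ 1 → ∀ n : ℕ, 1 ≤ n → ((n : ℝ) + 1) * h ≤ T →
      ∀ (u : ℕ → E) (p : E), IsLinearPredictor c β h f φ n u p →
        ‖y (((n : ℝ) + 1) * h) - p‖
          ≤ 2 * |c| * L * (‖y ((n - 1 : ℕ) * h) - u (n - 1)‖ + 2 * ‖y (n * h) - u n‖)
            + 2 * β * h * ∑ j ∈ range (n + 1), ‖y (j * h) - u j‖ + C * h ^ 2 := by
  obtain ⟨K₁, hK₁⟩ :=
    exists_chordErrorBoundOn (convex_Icc 0 T) isCompact_Icc (uniqueDiffOn_Icc hT) hy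
  obtain ⟨K₂, hK₂⟩ :=
    exists_chordErrorBoundOn (convex_Icc 0 T) isCompact_Icc (uniqueDiffOn_Icc hT) hfy
  exact ⟨2 * (|c| * (8 * K₂) + β * (K₁ * T)), fun h hh hβh n hn hnT u p hp ↦
    hp.norm_error_le hβ hh hβh hn hnT hf hy.continuousOn hK₁ hK₂
      (hint _ ⟨by positivity, hnT⟩)⟩

end Predictor

/-- Predictor error bound of the linear-interpolation predictor–corrector scheme:
`|Eᴾₙ₊₁| ≤ (2L(1-α)/M)(|Eₙ₋₁| + 2|Eₙ|) + 4βh Σ_{j=1}^n |E_j| + C h²`. -/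
theorem linear_predictor_error
    (α β M T L y₀ : ℝ) (f : ℝ → ℝ → ℝ) (y : ℝ → ℝ)
    (hα : α ∈ Set.Ioo (0 : ℝ) 1) (hβ : β = α / (1 - α)) (hM : 0 < M) (hT : 0 < T)
    (hL : 0 ≤ L)
    (hf : ∀ t ∈ Set.Icc (0 : ℝ) T, ∀ u₁ u₂ : ℝ, |f t u₁ - f t u₂| ≤ L * |u₁ - u₂|)
    (hy : ContDiffOn ℝ 2 y (Set.Icc 0 T)) (hy0 : y 0 = y₀)
    (hfy : ContDiffOn ℝ 2 (fun t => f t (y t)) (Set.Icc 0 T))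
    (hint : ∀ t ∈ Set.Icc (0 : ℝ) T,
      y t = ((1 - α) / M) * f t (y t) + y₀ * Real.exp (-β * t)
        + β * ∫ s in (0 : ℝ)..t, y s * Real.exp (-β * (t - s))) :
    ∃ h₀ > (0 : ℝ), ∃ C : ℝ,
      ∀ (N : ℕ) (h : ℝ), h = T / (N + 1) → h ≤ h₀ →
        ∀ yseq yp : ℕ → ℝ,
          yseq 0 = y₀ →
          (∀ n, 1 ≤ n → n ≤ N →
            -- predictor
            (1 - β * linB2 β h n n) * yp (n + 1)
              = (((1 - α) / M) * (-(f ((↑(n - 1) : ℝ) * h) (yseq (n - 1)))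
                    + 2 * f ((n : ℝ) * h) (yseq n))
                  + y₀ * Real.exp (-β * (((n : ℝ) + 1) * h)))
                + β * ((∑ j ∈ Finset.range n,
                    (linB1 β h n j * yseq j + linB2 β h n j * yseq (j + 1)))
                  + linB1 β h n n * yseq n) ∧
            -- corrector
            (1 - β * linB2 β h n n) * yseq (n + 1)
              = (((1 - α) / M) * f (((n : ℝ) + 1) * h) (yp (n + 1))
                  + y₀ * Real.exp (-β * (((n : ℝ) + 1) * h)))
                + β * ((∑ j ∈ Finset.range n,
                    (linB1 β h n j * yseq j + linB2 β h n j * yseq (j + 1)))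
                  + linB1 β h n n * yseq n)) →
          ∀ n, 1 ≤ n → n ≤ N →
            |y (((n : ℝ) + 1) * h) - yp (n + 1)|
              ≤ (2 * L * (1 - α) / M)
                  * (|y ((↑(n - 1) : ℝ) * h) - yseq (n - 1)|
                    + 2 * |y ((n : ℝ) * h) - yseq n|)
                + 4 * β * h * (∑ j ∈ Finset.Icc 1 n, |y ((j : ℝ) * h) - yseq j|)
                + C * h ^ 2 := by
  have hc : 0 ≤ (1 - α) / M := div_nonneg (sub_nonneg.2 hα.2.le) hM.le
  have hβ_pos : 0 < β := hβ ▸ div_pos hα.1 (sub_pos.2 hα.2)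
  obtain ⟨C, hC⟩ := linear_predictor_error_general (c := (1 - α) / M)
    (φ := fun t ↦ y₀ * Real.exp (-β * t)) hβ_pos.le hT hf hy hfy fun t ht ↦ by
      simpa only [smul_eq_mul, mul_comm (Real.exp _)] using hint t ht
  refine ⟨1 / β, by positivity, C, fun N h hh hh₀ u p hu₀ hscheme n hn hnN ↦ ?_⟩
  have hh_pos : 0 < h := by rw [hh]; positivity
  have hnT : ((n : ℝ) + 1) * h ≤ T := by
    rw [hh, mul_div_assoc', div_le_iff₀ (by positivity), mul_comm]
    gcongr
  have hpred := hC h hh_pos (by rwa [← le_div_iff₀' hβ_pos]) n hn hnT u (p (n + 1)) <| by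
    simpa only [IsLinearPredictor, linHistory, smul_eq_mul, neg_add_eq_sub] using
      (hscheme n hn hnN).1
  have hsum_nonneg : 0 ≤ β * h * ∑ j ∈ Icc 1 n, |y ((j : ℝ) * h) - u j| := by positivity
  rw [sum_range_succ_eq_sum_Icc_one (by simp [hy0, hu₀]), abs_of_nonneg hc] at hpred
  simp only [Real.norm_eq_abs] at hpred
  linear_combination hpred + 2 * hsum_nonneg
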